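/- Let Ω be any smooth domain of ℝ^N, p > 1, u0 ∈ L^∞(Ω), and let u be a blow-up solution of the semilinear heat problem with blow-up time T < ∞ satisfying the type I estimate ‖u(t)‖_{L^∞(Ω)} ≤ M(T−t)^{−β} for 0 ≤ t < T, with some M > 0. Suppose that liminf_{t→T} ∫_{Ω ∩ B_{r_0}(a_0)} |u(t,x)|^{q*} dx < ∞ for some a_0 ∈ ℝ^N and r_0 > 0, where q* = N(p−1)/2. Then u has at most finitely many blow-up points in the ball B_{r_0}(a_0). -/

import Mathlib

open MeasureTheory Filter Set Metric
open scoped ENNReal Topology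

noncomputable section

/-- The Laplacian of `f : ℝ^N → ℝ`, as the sum of second partial derivatives. -/
def lap {N : ℕ} (f : EuclideanSpace ℝ (Fin N) → ℝ) (x : EuclideanSpace ℝ (Fin N)) : ℝ :=
  ∑ i, fderiv ℝ (fun y => fderiv ℝ f y (EuclideanSpace.single i 1)) x (EuclideanSpace.single i 1)

/-- `u` is a classical solution of the semilinear heat equation `u_t = Δu + |u|^{p-1}u`
on `(0,T) × Ω`, with Dirichlet boundary condition on `∂Ω` and initial data `u0`. -/
def IsClassicalSol {N : ℕ} (Ω : Set (EuclideanSpace ℝ (Fin N)))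
    (u0 : EuclideanSpace ℝ (Fin N) → ℝ) (p T : ℝ)
    (u : ℝ → EuclideanSpace ℝ (Fin N) → ℝ) : Prop :=
  (∀ t ∈ Ioo (0:ℝ) T, ContDiffOn ℝ 2 (u t) Ω) ∧
  (∀ x ∈ Ω, ∀ t ∈ Ioo (0:ℝ) T, DifferentiableAt ℝ (fun τ => u τ x) t) ∧
  ContinuousOn (fun q : ℝ × EuclideanSpace ℝ (Fin N) => u q.1 q.2)
    (Ioo (0:ℝ) T ×ˢ closure Ω) ∧
  (∀ t ∈ Ioo (0:ℝ) T, ∀ x ∈ Ω,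
    deriv (fun τ => u τ x) t = lap (u t) x + |u t x| ^ (p - 1) * u t x) ∧
  (∀ t ∈ Ioo (0:ℝ) T, ∀ x ∈ frontier Ω, u t x = 0) ∧
  (∀ x ∈ Ω, u 0 x = u0 x)

/-- The `L^∞(Ω)` norm (as an extended real), of a function on `ℝ^N`. -/
def supNormOn {N : ℕ} (Ω : Set (EuclideanSpace ℝ (Fin N)))
    (f : EuclideanSpace ℝ (Fin N) → ℝ) : ℝ≥0∞ :=
  ⨆ x ∈ Ω, ENNReal.ofReal |f x|

/-- `a` is a blow-up point of `u` at time `T`: `limsup_{t→T, x→a} |u(t,x)| = ∞`. -/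
def BlowupPoint {N : ℕ} (Ω : Set (EuclideanSpace ℝ (Fin N)))
    (u : ℝ → EuclideanSpace ℝ (Fin N) → ℝ) (T : ℝ)
    (a : EuclideanSpace ℝ (Fin N)) : Prop :=
  ∀ C : ℝ, ∀ ε > 0, ∃ t ∈ Ioo (T - ε) T, ∃ x ∈ Ω ∩ ball a ε, C < |u t x|

/-!
The idea is an ε-regularity argument resting on two explicit barriers, both applied to `u` and
`-u`, which are subsolutions. Put `β = 1/(p-1)`.

*Smoothing.* On `[t₀, t₀ + h]` with `t₀ + 2h ≤ T`, type I gives `u ≤ A` with `A = M h^{-β}`, so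
the reaction coefficient `A^{p-1} = M^{p-1}/h` costs only a bounded factor. By Chebyshev, a
critical norm `∫ |u(t₀)|^{q*} < c` makes the set `{u(t₀) ≥ e h^{-β}}` of measure
`≲ c e^{-q*} h^{N/2}`. Cover it economically by balls and place a heat kernel on each: criticality
is exactly what cancels the powers of `h`, and `u(t₀ + h) < ε h^{-β}` follows once `c` is small.

*Propagation.* Smallness `u < ε s^{-β}` at time `T - s` on a ball of radius `≳ √s` persists up to
time `T` at its centre: near the centre the reaction is too weak, and away from it the barrier
outgrows the type I bound.

So every blow-up point carries at least a fixed amount `c` of the critical norm in each of its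
neighbourhoods, at all times close to `T`; disjoint neighbourhoods of too many blow-up points would
make the liminf exceed any given finite bound.
-/

open Function InnerProductSpace Laplacian Module Real

section Laplacian

theorem deriv_deriv_nonneg_of_isLocalMin {f : ℝ → ℝ} {a : ℝ} (hf : ContinuousAt f a)
    (hmin : IsLocalMin f a) : 0 ≤ deriv (deriv f) a := by
  by_contra! hneg
  have hmax : IsLocalMax f a := isLocalMax_of_deriv_deriv_neg hneg hmin.deriv_eq_zero hf
  have hconst : f =ᶠ[𝓝 a] fun _ => f a := by
    filter_upwards [hmin, hmax] with x hge hle using le_antisymm hle hge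
  have hzero : deriv (deriv f) a = 0 := by simp [hconst.deriv.deriv_eq]
  exact hneg.ne hzero

section Line

variable {E : Type*} [NormedAddCommGroup E] [NormedSpace ℝ E]

theorem hasDerivAt_add_smul (x v : E) (t : ℝ) : HasDerivAt (fun h : ℝ => x + h • v) v t := by
  simpa using ((hasDerivAt_id t).smul_const v).const_add x

theorem deriv_deriv_comp_add_smul {f : E → ℝ} {x : E} (hf : ContDiffAt ℝ 2 f x) (v : E) :
    deriv (deriv fun h : ℝ => f (x + h • v)) 0 = fderiv ℝ (fderiv ℝ f) x v v := by
  have hline : Tendsto (fun h : ℝ => x + h • v) (𝓝 0) (𝓝 x) := by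
    simpa using (hasDerivAt_add_smul x v 0).continuousAt.tendsto
  have hfirst : deriv (fun h : ℝ => f (x + h • v)) =ᶠ[𝓝 0]
      fun h => fderiv ℝ f (x + h • v) v := by
    filter_upwards [hline.eventually (hf.eventually (by simp))] with h hh
    exact HasDerivAt.deriv (HasFDerivAt.comp_hasDerivAt (l := f) h
      (hh.differentiableAt two_ne_zero).hasFDerivAt (hasDerivAt_add_smul x v h))
  have hdiff : HasFDerivAt (fderiv ℝ f) (fderiv ℝ (fderiv ℝ f) x) (x + (0 : ℝ) • v) := by
    rw [zero_smul, add_zero]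
    exact ((hf.fderiv_right (m := 1) le_rfl).differentiableAt one_ne_zero).hasFDerivAt
  have hsecond : HasFDerivAt (fun y => fderiv ℝ f y v) ((fderiv ℝ (fderiv ℝ f) x).flip v)
      (x + (0 : ℝ) • v) := by
    simpa using hdiff.clm_apply (hasFDerivAt_const v _)
  have hcomp := HasFDerivAt.comp_hasDerivAt (l := fun y => fderiv ℝ f y v) 0 hsecond
    (hasDerivAt_add_smul x v 0)
  rw [hfirst.deriv_eq]
  exact hcomp.deriv

end Line

variable {E : Type*} [NormedAddCommGroup E] [InnerProductSpace ℝ E] [FiniteDimensional ℝ E]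

theorem laplacian_eq_sum_deriv_deriv {ι : Type*} [Fintype ι] (e : OrthonormalBasis ι ℝ E)
    {f : E → ℝ} {x : E} (hf : ContDiffAt ℝ 2 f x) :
    Δ f x = ∑ i, deriv (deriv fun h : ℝ => f (x + h • e i)) 0 := by
  simp [laplacian_eq_iteratedFDeriv_orthonormalBasis f e, iteratedFDeriv_two_apply,
    deriv_deriv_comp_add_smul hf]

theorem lap_eq_laplacian {N : ℕ} {f : EuclideanSpace ℝ (Fin N) → ℝ} {x : EuclideanSpace ℝ (Fin N)}
    (hf : ContDiffAt ℝ 2 f x) : lap f x = Δ f x := by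
  have hdiff : DifferentiableAt ℝ (fderiv ℝ f) x :=
    (hf.fderiv_right (m := 1) le_rfl).differentiableAt one_ne_zero
  simp [lap, laplacian_eq_iteratedFDeriv_orthonormalBasis f (EuclideanSpace.basisFun (Fin N) ℝ),
    iteratedFDeriv_two_apply, fderiv_clm_apply hdiff (differentiableAt_const _)]

theorem laplacian_nonneg_of_isLocalMin {f : E → ℝ} {x : E} (hf : ContDiffAt ℝ 2 f x)
    (hmin : IsLocalMin f x) : 0 ≤ Δ f x := by
  rw [laplacian_eq_sum_deriv_deriv (stdOrthonormalBasis ℝ E) hf]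
  refine Finset.sum_nonneg fun i _ => ?_
  have hline := (hasDerivAt_add_smul x (stdOrthonormalBasis ℝ E i) 0).continuousAt
  refine deriv_deriv_nonneg_of_isLocalMin (ContinuousAt.comp ?_ hline) ?_
  · simpa using hf.continuousAt
  · exact IsMinFilter.comp_tendsto (by simpa [IsLocalMin] using hmin) hline.tendsto

theorem deriv_deriv_comp_quadratic {f : ℝ → ℝ} (hf : ContDiff ℝ 2 f) (a b : ℝ) :
    deriv (deriv fun h : ℝ => f (a + 2 * b * h + h ^ 2)) 0 =
      4 * b ^ 2 * deriv (deriv f) a + 2 * deriv f a := by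
  have hquad : ∀ h : ℝ, HasDerivAt (fun h : ℝ => a + 2 * b * h + h ^ 2) (2 * b + 2 * h) h := by
    intro h
    simpa using (((hasDerivAt_id' h).const_mul (2 * b)).const_add a).fun_add (hasDerivAt_pow 2 h)
  have hfirst : (deriv fun h : ℝ => f (a + 2 * b * h + h ^ 2)) =
      fun h => deriv f (a + 2 * b * h + h ^ 2) * (2 * b + 2 * h) :=
    funext fun h => ((hf.differentiable two_ne_zero _).hasDerivAt.comp h (hquad h)).deriv
  have hsecond : HasDerivAt (fun h => deriv f (a + 2 * b * h + h ^ 2))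
      (deriv (deriv f) (a + 2 * b * 0 + 0 ^ 2) * (2 * b + 2 * 0)) 0 :=
    HasDerivAt.comp (h₂ := deriv f) 0
      ((contDiff_succ_iff_deriv.1 hf).2.2.differentiable one_ne_zero _).hasDerivAt (hquad 0)
  have hlinear : HasDerivAt (fun h : ℝ => 2 * b + 2 * h) (2 * 1) 0 :=
    ((hasDerivAt_id' 0).const_mul 2).const_add (2 * b)
  rw [hfirst, (hsecond.fun_mul hlinear).deriv]
  simp only [mul_zero, add_zero, ne_eq, OfNat.ofNat_ne_zero, not_false_eq_true, zero_pow, mul_one]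
  ring

theorem laplacian_comp_norm_sub_sq {f : ℝ → ℝ} (hf : ContDiff ℝ 2 f) (b x : E) :
    Δ (fun y => f (‖y - b‖ ^ 2)) x =
      4 * ‖x - b‖ ^ 2 * deriv (deriv f) (‖x - b‖ ^ 2) +
        2 * finrank ℝ E * deriv f (‖x - b‖ ^ 2) := by
  set e := stdOrthonormalBasis ℝ E
  have hsq : ∀ i (h : ℝ), ‖x + h • e i - b‖ ^ 2 =
      ‖x - b‖ ^ 2 + 2 * inner ℝ (e i) (x - b) * h + h ^ 2 := by
    intro i h
    rw [show x + h • e i - b = (x - b) + h • e i by abel, norm_add_sq_real, inner_smul_right,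
      real_inner_comm, norm_smul, e.norm_eq_one, mul_one, norm_eq_abs, sq_abs]
    ring
  have hcomp : ContDiffAt ℝ 2 (fun y => f (‖y - b‖ ^ 2)) x :=
    (hf.comp ((contDiff_id.sub contDiff_const).norm_sq ℝ)).contDiffAt
  simp_rw [laplacian_eq_sum_deriv_deriv e hcomp, hsq, deriv_deriv_comp_quadratic hf]
  have hparseval : ∑ i, inner ℝ (e i) (x - b) ^ 2 = ‖x - b‖ ^ 2 := by
    simpa using e.sum_sq_norm_inner_right (x - b)
  rw [Finset.sum_add_distrib, ← Finset.sum_mul, ← Finset.mul_sum, hparseval]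
  simp only [Finset.sum_const, Finset.card_univ, Fintype.card_fin, nsmul_eq_mul]
  ring

theorem laplacian_const_mul (c : ℝ) {f : E → ℝ} {x : E} (hf : ContDiffAt ℝ 2 f x) :
    Δ (fun y => c * f y) x = c * Δ f x :=
  laplacian_smul c hf

end Laplacian

section Comparison

theorem deriv_nonpos_of_forall_le {f : ℝ → ℝ} {a t : ℝ} (hat : a < t)
    (hf : ∀ τ ∈ Ioo a t, f t ≤ f τ) : deriv f t ≤ 0 := by
  by_cases hd : DifferentiableAt ℝ f t
  · have hslope := (hasDerivWithinAt_iff_tendsto_slope' (s := Iio t) (by simp)).1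
      hd.hasDerivAt.hasDerivWithinAt
    refine le_of_tendsto hslope ?_
    filter_upwards [Ioo_mem_nhdsLT hat] with τ hτ
    rw [slope_def_field]
    exact div_nonpos_of_nonneg_of_nonpos (sub_nonneg.2 (hf τ hτ)) (sub_nonpos.2 hτ.2.le)
  · exact (deriv_zero_of_not_differentiableAt hd).le

theorem exists_first_zero {X : Type*} [TopologicalSpace X] [T2Space X] {K : Set X}
    (hK : IsCompact K) {z : ℝ → X → ℝ} {t₁ t₂ : ℝ}
    (hz : ContinuousOn (uncurry z) (Icc t₁ t₂ ×ˢ K)) (hinit : ∀ x ∈ K, 0 < z t₁ x)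
    (hnonpos : ∃ t ∈ Icc t₁ t₂, ∃ x ∈ K, z t x ≤ 0) :
    ∃ t ∈ Ioc t₁ t₂, ∃ x ∈ K, z t x = 0 ∧ (∀ τ ∈ Ico t₁ t, ∀ y ∈ K, 0 < z τ y) ∧
      ∀ y ∈ K, 0 ≤ z t y := by
  set D := Icc t₁ t₂ ×ˢ K
  have hD : IsCompact D := isCompact_Icc.prod hK
  have hB : IsCompact (D ∩ uncurry z ⁻¹' Iic 0) :=
    hD.of_isClosed_subset (hz.preimage_isClosed_of_isClosed hD.isClosed isClosed_Iic)
      inter_subset_left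
  obtain ⟨s, hs, y, hy, hsy⟩ := hnonpos
  obtain ⟨⟨t, x⟩, ⟨⟨ht, hx⟩, hle⟩, hmin⟩ :=
    hB.exists_isMinOn ⟨(s, y), ⟨hs, hy⟩, hsy⟩ continuous_fst.continuousOn
  simp only at ht hx
  have hpos : ∀ τ ∈ Ico t₁ t, ∀ y ∈ K, 0 < z τ y := by
    intro τ hτ y hy
    by_contra! hneg
    exact hτ.2.not_ge (hmin (a := (τ, y)) ⟨⟨⟨hτ.1, hτ.2.le.trans ht.2⟩, hy⟩, hneg⟩)
  have ht₁ : t₁ < t := ht.1.lt_of_ne (by rintro rfl; exact (hinit x hx).not_ge hle)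
  have hnonneg : ∀ y ∈ K, 0 ≤ z t y := by
    intro y hy
    have hleft : (𝓝[Ico t₁ t] t).NeBot := by
      rw [← mem_closure_iff_nhdsWithin_neBot, closure_Ico ht₁.ne]
      exact right_mem_Icc.2 ht₁.le
    have hcont : ContinuousWithinAt (fun τ => z τ y) (Ico t₁ t) t :=
      (hz (t, y) ⟨ht, hy⟩).comp (f := fun τ : ℝ => (τ, y)) (by fun_prop)
        fun τ hτ => ⟨⟨hτ.1, hτ.2.le.trans ht.2⟩, hy⟩
    refine ge_of_tendsto hcont ?_
    filter_upwards [self_mem_nhdsWithin] with τ hτ using (hpos τ hτ y hy).le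
  exact ⟨t, ⟨ht₁, ht.2⟩, x, hx, le_antisymm hle (hnonneg x hx), hpos, hnonneg⟩

section Slices

variable {E : Type*} [NormedAddCommGroup E] [NormedSpace ℝ E] {W : ℝ → E → ℝ} {t : ℝ} {x : E}
  {k : WithTop ℕ∞}

theorem contDiffAt_slice_space (hW : ContDiffAt ℝ k (uncurry W) (t, x)) :
    ContDiffAt ℝ k (W t) x :=
  hW.comp x (contDiffAt_const.prodMk contDiffAt_id)

theorem contDiffAt_slice_time (hW : ContDiffAt ℝ k (uncurry W) (t, x)) :
    ContDiffAt ℝ k (fun τ => W τ x) t :=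
  ContDiffAt.comp (g := uncurry W) t hW (contDiffAt_id.prodMk contDiffAt_const)

end Slices

variable {E : Type*} [NormedAddCommGroup E] [InnerProductSpace ℝ E] [FiniteDimensional ℝ E]

theorem pos_of_laplacian_lt_deriv {z : ℝ → E → ℝ} {U : Set E} {t₁ t₂ : ℝ} (hU : IsOpen U)
    (hbdd : Bornology.IsBounded U) (hz : ContinuousOn (uncurry z) (Icc t₁ t₂ ×ˢ closure U))
    (hC2 : ∀ t ∈ Ioc t₁ t₂, ∀ x ∈ U, ContDiffAt ℝ 2 (z t) x)
    (hinit : ∀ x ∈ closure U, 0 < z t₁ x)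
    (hside : ∀ t ∈ Ioc t₁ t₂, ∀ x ∈ frontier U, 0 < z t x)
    (hzero : ∀ t ∈ Ioc t₁ t₂, ∀ x ∈ U, z t x = 0 → Δ (z t) x < deriv (fun τ => z τ x) t) :
    ∀ t ∈ Icc t₁ t₂, ∀ x ∈ closure U, 0 < z t x := by
  by_contra! hneg
  obtain ⟨t, ht, x, hx, hzx, hbefore, hnonneg⟩ :=
    exists_first_zero hbdd.isCompact_closure hz hinit hneg
  have hxU : x ∈ U := by
    by_contra hxU
    exact (hside t ht x (hU.frontier_eq ▸ ⟨hx, hxU⟩)).ne' hzx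
  have hmin : IsLocalMin (z t) x := by
    filter_upwards [hU.mem_nhds hxU] with y hy
    exact hzx.trans_le (hnonneg y (subset_closure hy))
  have hderiv : deriv (fun τ => z τ x) t ≤ 0 :=
    deriv_nonpos_of_forall_le ht.1 fun τ hτ =>
      hzx.trans_le (hbefore τ (Ioo_subset_Ico_self hτ) x hx).le
  exact ((laplacian_nonneg_of_isLocalMin (hC2 t ht x hxU) hmin).trans_lt
    (hzero t ht x hxU hzx)).not_ge hderiv

/-- Classical subsolutions `v_t ≤ Δv + |v|^{p-1}v` of the semilinear heat equation on `(0,T) × Ω`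
with `v ≤ 0` on `∂Ω`. Both `u` and `-u` are subsolutions when `u` is a solution, so one-sided
estimates on subsolutions control `|u|`. -/
structure IsClassicalSubsol (Ω : Set E) (p T : ℝ) (v : ℝ → E → ℝ) : Prop where
  contDiffOn : ∀ t ∈ Ioo 0 T, ContDiffOn ℝ 2 (v t) Ω
  differentiableAt : ∀ t ∈ Ioo 0 T, ∀ x ∈ Ω, DifferentiableAt ℝ (fun τ => v τ x) t
  continuousOn : ContinuousOn (uncurry v) (Ioo 0 T ×ˢ closure Ω)
  deriv_le : ∀ t ∈ Ioo 0 T, ∀ x ∈ Ω,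
    deriv (fun τ => v τ x) t ≤ Δ (v t) x + |v t x| ^ (p - 1) * v t x
  nonpos_of_mem_frontier : ∀ t ∈ Ioo 0 T, ∀ x ∈ frontier Ω, v t x ≤ 0

namespace IsClassicalSubsol

variable {Ω : Set E} {p T : ℝ} {v : ℝ → E → ℝ}

theorem contDiffAt (hv : IsClassicalSubsol Ω p T v) (hΩ : IsOpen Ω) {t : ℝ} (ht : t ∈ Ioo 0 T)
    {x : E} (hx : x ∈ Ω) : ContDiffAt ℝ 2 (v t) x :=
  (hv.contDiffOn t ht).contDiffAt (hΩ.mem_nhds hx)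

theorem laplacian_sub_lt_deriv_sub (hv : IsClassicalSubsol Ω p T v) (hΩ : IsOpen Ω) {t : ℝ}
    (ht : t ∈ Ioo 0 T) {x : E} (hx : x ∈ Ω) {W : ℝ → E → ℝ}
    (hW : ContDiffAt ℝ 2 (uncurry W) (t, x)) (hWpos : 0 < W t x) (hcontact : v t x = W t x)
    (hsuper : Δ (W t) x + W t x ^ (p - 1) * W t x < deriv (fun τ => W τ x) t) :
    Δ (fun y => W t y - v t y) x < deriv (fun τ => W τ x - v τ x) t := by
  have hle := hv.deriv_le t ht x hx
  have hlap : Δ (fun y => W t y - v t y) x = Δ (W t) x - Δ (v t) x :=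
    (contDiffAt_slice_space hW).laplacian_sub (hv.contDiffAt hΩ ht hx)
  rw [hcontact, abs_of_pos hWpos] at hle
  rw [hlap, deriv_fun_sub ((contDiffAt_slice_time hW).differentiableAt two_ne_zero)
    (hv.differentiableAt t ht x hx)]
  linarith

theorem lt_of_barrier (hv : IsClassicalSubsol Ω p T v) (hΩ : IsOpen Ω) {t₁ t₂ : ℝ} (ht₁ : 0 < t₁)
    (ht₂ : t₂ < T) {b : E} {ρ : ℝ} {W : ℝ → E → ℝ}
    (hW : ∀ t ∈ Icc t₁ t₂, ∀ x, ContDiffAt ℝ 2 (uncurry W) (t, x))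
    (hWpos : ∀ t ∈ Icc t₁ t₂, ∀ x, 0 < W t x)
    (hinit : ∀ x ∈ Ω ∩ closedBall b ρ, v t₁ x < W t₁ x)
    (hside : ∀ t ∈ Icc t₁ t₂, ∀ x ∈ Ω ∩ sphere b ρ, v t x < W t x)
    (hsuper : ∀ t ∈ Icc t₁ t₂, ∀ x ∈ Ω ∩ ball b ρ, v t x = W t x →
      Δ (W t) x + W t x ^ (p - 1) * W t x < deriv (fun τ => W τ x) t) :
    ∀ t ∈ Icc t₁ t₂, ∀ x ∈ Ω ∩ ball b ρ, v t x < W t x := by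
  have htime : Icc t₁ t₂ ⊆ Ioo 0 T := fun t ht => ⟨ht₁.trans_le ht.1, ht.2.trans_lt ht₂⟩
  have hspace : closure (Ω ∩ ball b ρ) ⊆ closure Ω ∩ closedBall b ρ :=
    (closure_inter_subset_inter_closure _ _).trans
      (inter_subset_inter_right _ closure_ball_subset_closedBall)
  have hfrontier : ∀ t ∈ Icc t₁ t₂, ∀ x ∈ frontier Ω, v t x < W t x := fun t ht x hx =>
    (hv.nonpos_of_mem_frontier t (htime ht) x hx).trans_lt (hWpos t ht x)
  have hclosure : ∀ t ∈ Icc t₁ t₂, ∀ x ∈ closure Ω, (x ∈ Ω → v t x < W t x) → v t x < W t x := by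
    intro t ht x hx hlt
    by_cases hxΩ : x ∈ Ω
    · exact hlt hxΩ
    · exact hfrontier t ht x (hΩ.frontier_eq ▸ ⟨hx, hxΩ⟩)
  intro t ht x hx
  have hinterval : t₁ ∈ Icc t₁ t₂ := left_mem_Icc.2 (ht.1.trans ht.2)
  refine sub_pos.1 (pos_of_laplacian_lt_deriv (z := fun t x => W t x - v t x)
    (U := Ω ∩ ball b ρ) (t₁ := t₁) (t₂ := t₂) (hΩ.inter isOpen_ball)
    (isBounded_ball.subset inter_subset_right) ?_ ?_ ?_ ?_ ?_ t ht x (subset_closure hx))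
  · exact ContinuousOn.sub (fun q hq => (hW q.1 hq.1 q.2).continuousAt.continuousWithinAt)
      (hv.continuousOn.mono (prod_mono htime (hspace.trans inter_subset_left)))
  · exact fun t ht x hx => have ht := Ioc_subset_Icc_self ht
      (contDiffAt_slice_space (hW t ht x)).sub (hv.contDiffAt hΩ (htime ht) hx.1)
  · exact fun x hx => sub_pos.2 (hclosure t₁ hinterval x (hspace hx).1 fun hxΩ =>
      hinit x ⟨hxΩ, (hspace hx).2⟩)
  · intro t ht x hx
    refine sub_pos.2 ?_
    rcases frontier_inter_subset _ _ hx with hx | hx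
    · exact hfrontier t (Ioc_subset_Icc_self ht) x hx.1
    · exact hclosure t (Ioc_subset_Icc_self ht) x hx.1 fun hxΩ =>
        hside t (Ioc_subset_Icc_self ht) x ⟨hxΩ, frontier_ball_subset_sphere hx.2⟩
  · exact fun t ht x hx hzero => have ht := Ioc_subset_Icc_self ht
      have hcontact := (sub_eq_zero.1 hzero).symm
      hv.laplacian_sub_lt_deriv_sub hΩ (htime ht) hx.1 (hW t ht x) (hWpos t ht x) hcontact
        (hsuper t ht x hx hcontact)

end IsClassicalSubsol

section Solution

variable {N : ℕ} {Ω : Set (EuclideanSpace ℝ (Fin N))} {u0 : EuclideanSpace ℝ (Fin N) → ℝ}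
  {p T : ℝ} {u : ℝ → EuclideanSpace ℝ (Fin N) → ℝ}

theorem IsClassicalSol.deriv_eq (hu : IsClassicalSol Ω u0 p T u) (hΩ : IsOpen Ω) {t : ℝ}
    (ht : t ∈ Ioo 0 T) {x : EuclideanSpace ℝ (Fin N)} (hx : x ∈ Ω) :
    deriv (fun τ => u τ x) t = Δ (u t) x + |u t x| ^ (p - 1) * u t x := by
  rw [hu.2.2.2.1 t ht x hx, lap_eq_laplacian ((hu.1 t ht).contDiffAt (hΩ.mem_nhds hx))]

theorem IsClassicalSol.isClassicalSubsol (hu : IsClassicalSol Ω u0 p T u) (hΩ : IsOpen Ω) :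
    IsClassicalSubsol Ω p T u where
  contDiffOn := hu.1
  differentiableAt t ht x hx := hu.2.1 x hx t ht
  continuousOn := hu.2.2.1
  deriv_le _ ht _ hx := (hu.deriv_eq hΩ ht hx).le
  nonpos_of_mem_frontier t ht x hx := (hu.2.2.2.2.1 t ht x hx).le

theorem IsClassicalSol.isClassicalSubsol_neg (hu : IsClassicalSol Ω u0 p T u) (hΩ : IsOpen Ω) :
    IsClassicalSubsol Ω p T (-u) where
  contDiffOn t ht := (hu.1 t ht).neg
  differentiableAt t ht x hx := (hu.2.1 x hx t ht).neg
  continuousOn := hu.2.2.1.neg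
  deriv_le t ht x hx := by
    have hlap : Δ ((-u) t) x = -Δ (u t) x := congrFun laplacian_neg x
    have hderiv : deriv (fun τ => (-u) τ x) t = -deriv (fun τ => u τ x) t := deriv.fun_neg
    rw [hlap, hderiv, hu.deriv_eq hΩ ht hx, Pi.neg_apply, Pi.neg_apply, abs_neg]
    linarith
  nonpos_of_mem_frontier t ht x hx := by simp [hu.2.2.2.2.1 t ht x hx]

end Solution

end Comparison

section Caloric

theorem exists_finset_ball_cover {X : Type*} [PseudoMetricSpace X] [MeasurableSpace X]
    [OpensMeasurableSpace X] {μ : Measure X} [μ.OuterRegular] {K : Set X} (hK : IsCompact K)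
    {V : ℝ≥0∞} (hV : μ K < V) :
    ∃ F : Finset (X × ℝ), (∀ q ∈ F, 0 < q.2) ∧ (∀ x ∈ K, ∃ q ∈ F, dist x q.1 ≤ 5 * q.2) ∧
      ∑ q ∈ F, μ (ball q.1 q.2) ≤ V := by
  obtain ⟨U, hKU, hU, hUV⟩ := K.exists_isOpen_lt_of_lt _ hV
  classical
  have hradius : ∀ x : X, ∃ r : ℝ, 0 < r ∧ (x ∈ K → ball x r ⊆ U) := fun x =>
    if hx : x ∈ K then (isOpen_iff.1 hU x (hKU hx)).imp fun _ h => ⟨h.1, fun _ => h.2⟩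
    else ⟨1, one_pos, fun h => absurd h hx⟩
  choose r hr hrU using hradius
  obtain ⟨s, hsK, hs⟩ := hK.elim_nhds_subcover (fun x => ball x (r x))
    fun x _ => ball_mem_nhds x (hr x)
  obtain ⟨R, hR⟩ := (s.finite_toSet.image r).bddAbove
  obtain ⟨u, hus, hdisj, hcover⟩ :=
    Vitali.exists_disjoint_subfamily_covering_enlargement_closedBall (t := (s : Set X)) (x := id)
      (r := r) (R := R) (fun a ha => hR ⟨a, ha, rfl⟩) 5 (by norm_num)
  lift u to Finset X using s.finite_toSet.subset hus
  have hinj : Injective fun x => (x, r x) := fun _ _ h => (Prod.mk.inj h).1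
  refine ⟨u.map ⟨_, hinj⟩, by simp [hr], fun x hx => ?_, ?_⟩
  · obtain ⟨a, ha, hxa⟩ := mem_iUnion₂.1 (hs hx)
    obtain ⟨c, hc, hac⟩ := hcover a ha
    exact ⟨(c, r c), Finset.mem_map_of_mem _ hc, hac (ball_subset_closedBall hxa)⟩
  · calc ∑ q ∈ u.map ⟨_, hinj⟩, μ (ball q.1 q.2) = ∑ x ∈ u, μ (ball x (r x)) := by simp
      _ = μ (⋃ x ∈ u, ball x (r x)) :=
        (measure_biUnion_finset (fun a ha b hb hab => (hdisj ha hb hab).mono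
          ball_subset_closedBall ball_subset_closedBall) fun x _ => measurableSet_ball).symm
      _ ≤ μ U := measure_mono (iUnion₂_subset fun x hx => hrU x (hsK x (hus hx)))
      _ ≤ V := hUV.le

section HeatKernel

variable {E : Type*} [NormedAddCommGroup E] [InnerProductSpace ℝ E]

/-- The heat kernel with pole `z` at time `σ`, without the normalising factor `(4π)^{-n/2}`. -/
def heatKernel (z : E) (σ : ℝ) (x : E) : ℝ :=
  σ ^ (-(finrank ℝ E / 2 : ℝ)) * exp (-‖x - z‖ ^ 2 / (4 * σ))

theorem heatKernel_nonneg (z : E) {σ : ℝ} (hσ : 0 ≤ σ) (x : E) : 0 ≤ heatKernel z σ x :=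
  mul_nonneg (rpow_nonneg hσ _) (exp_pos _).le

theorem heatKernel_le (z : E) {σ : ℝ} (hσ : 0 ≤ σ) (x : E) :
    heatKernel z σ x ≤ σ ^ (-(finrank ℝ E / 2 : ℝ)) := by
  refine mul_le_of_le_one_right (rpow_nonneg hσ _) (exp_le_one_iff.2 ?_)
  exact div_nonpos_of_nonpos_of_nonneg (neg_nonpos.2 (sq_nonneg _)) (by positivity)

theorem sq_rpow_neg_half {r : ℝ} (hr : 0 ≤ r) (n : ℕ) :
    (r ^ 2) ^ (-(n / 2 : ℝ)) = (r ^ n)⁻¹ := by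
  rw [← rpow_natCast r 2, ← rpow_mul hr, ← rpow_natCast r n, ← rpow_neg hr]
  congr 1
  push_cast
  ring

theorem exp_neg_le_pow_mul_heatKernel {z x : E} {r : ℝ} (hr : 0 < r) (hx : dist x z ≤ 5 * r) :
    exp (-(25 / 4)) ≤ r ^ finrank ℝ E * heatKernel z (r ^ 2) x := by
  have hsq : ‖x - z‖ ^ 2 ≤ (5 * r) ^ 2 := by
    rw [← dist_eq_norm]
    gcongr
  rw [heatKernel, sq_rpow_neg_half hr.le, mul_inv_cancel_left₀ (by positivity), exp_le_exp,
    neg_div, neg_le_neg_iff, div_le_div_iff₀ (by positivity) (by norm_num)]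
  linarith

theorem contDiffAt_heatKernel (z : E) {σ : ℝ} (hσ : 0 < σ) (x : E) :
    ContDiffAt ℝ 2 (uncurry (heatKernel z)) (σ, x) := by
  have hpow : ContDiffAt ℝ 2 (fun q : ℝ × E => q.1 ^ (-(finrank ℝ E / 2 : ℝ))) (σ, x) :=
    contDiffAt_fst.rpow_const_of_ne hσ.ne'
  have hnorm : ContDiffAt ℝ 2 (fun q : ℝ × E => -‖q.2 - z‖ ^ 2) (σ, x) :=
    ((contDiffAt_snd.sub contDiffAt_const).norm_sq ℝ).neg
  exact hpow.mul (hnorm.div (contDiffAt_const.mul contDiffAt_fst) (by positivity)).exp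

theorem deriv_heatKernel (z : E) {σ : ℝ} (hσ : 0 < σ) (x : E) :
    deriv (fun τ => heatKernel z τ x) σ =
      heatKernel z σ x * (‖x - z‖ ^ 2 / (4 * σ ^ 2) - finrank ℝ E / (2 * σ)) := by
  have hpow := (hasDerivAt_id' σ).rpow_const (p := -(finrank ℝ E / 2 : ℝ)) (Or.inl hσ.ne')
  have hexp := ((hasDerivAt_const σ (-‖x - z‖ ^ 2)).fun_div ((hasDerivAt_id' σ).const_mul 4)
    (by positivity)).exp
  refine (hpow.fun_mul hexp).deriv.trans ?_
  rw [heatKernel, rpow_sub_one hσ.ne']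
  field_simp
  ring

end HeatKernel

variable {E : Type*} [NormedAddCommGroup E] [InnerProductSpace ℝ E] [FiniteDimensional ℝ E]

/-- `V` solves the heat equation `V_t = ΔV` at `(t, x)`, being of class `C²` in space-time there. -/
structure IsCaloricAt (V : ℝ → E → ℝ) (t : ℝ) (x : E) : Prop where
  contDiffAt : ContDiffAt ℝ 2 (uncurry V) (t, x)
  deriv_eq : deriv (fun τ => V τ x) t = Δ (V t) x

namespace IsCaloricAt

variable {V W : ℝ → E → ℝ} {t : ℝ} {x : E}

theorem const (c t : ℝ) (x : E) : IsCaloricAt (fun _ _ => c) t x where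
  contDiffAt := contDiffAt_const
  deriv_eq := by simp

theorem add (hV : IsCaloricAt V t x) (hW : IsCaloricAt W t x) :
    IsCaloricAt (fun t x => V t x + W t x) t x where
  contDiffAt := hV.contDiffAt.add hW.contDiffAt
  deriv_eq := by
    have hlap : Δ (fun y => V t y + W t y) x = Δ (V t) x + Δ (W t) x :=
      (contDiffAt_slice_space hV.contDiffAt).laplacian_add (contDiffAt_slice_space hW.contDiffAt)
    rw [hlap, ← hV.deriv_eq, ← hW.deriv_eq]
    exact deriv_fun_add ((contDiffAt_slice_time hV.contDiffAt).differentiableAt two_ne_zero)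
      ((contDiffAt_slice_time hW.contDiffAt).differentiableAt two_ne_zero)

theorem const_mul (c : ℝ) (hV : IsCaloricAt V t x) : IsCaloricAt (fun t x => c * V t x) t x where
  contDiffAt := contDiffAt_const.mul hV.contDiffAt
  deriv_eq := by
    rw [laplacian_const_mul c (contDiffAt_slice_space hV.contDiffAt), ← hV.deriv_eq]
    exact deriv_const_mul_field c

theorem sum {ι : Type*} {F : Finset ι} {V : ι → ℝ → E → ℝ}
    (hV : ∀ i ∈ F, IsCaloricAt (V i) t x) : IsCaloricAt (fun t x => ∑ i ∈ F, V i t x) t x := by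
  induction F using Finset.cons_induction with
  | empty => simpa using const 0 t x
  | cons i F hi ih =>
    simp only [Finset.sum_cons]
    exact (hV i (F.mem_cons_self i)).add (ih fun j hj => hV j (Finset.mem_cons_of_mem hj))

theorem comp_add_const {c : ℝ} (hV : IsCaloricAt V (t + c) x) :
    IsCaloricAt (fun t x => V (t + c) x) t x where
  contDiffAt := ContDiffAt.comp (g := uncurry V) (t, x) hV.contDiffAt
    (f := fun q : ℝ × E => (q.1 + c, q.2)) (by fun_prop)
  deriv_eq := (deriv_comp_add_const (fun τ => V τ x) c t).trans hV.deriv_eq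

end IsCaloricAt

theorem isCaloricAt_norm_sub_sq (b : E) (t : ℝ) (x : E) :
    IsCaloricAt (fun t x => ‖x - b‖ ^ 2 + 2 * finrank ℝ E * t) t x where
  contDiffAt := by
    refine ContDiff.contDiffAt (ContDiff.add (ContDiff.norm_sq ℝ ?_) ?_) <;> fun_prop
  deriv_eq := by
    have hsq : Δ (fun y => (‖y - b‖ ^ 2 + 2 * finrank ℝ E * t : ℝ)) x = 2 * finrank ℝ E := by
      simpa using laplacian_comp_norm_sub_sq (f := fun r => r + 2 * finrank ℝ E * t)
        (by fun_prop) b x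
    simp [hsq]

theorem laplacian_heatKernel (z : E) {σ : ℝ} (hσ : 0 < σ) (x : E) :
    Δ (heatKernel z σ) x =
      heatKernel z σ x * (‖x - z‖ ^ 2 / (4 * σ ^ 2) - finrank ℝ E / (2 * σ)) := by
  set c := σ ^ (-(finrank ℝ E / 2 : ℝ))
  have hderiv : ∀ k r : ℝ, deriv (fun r => k * exp (-r / (4 * σ))) r =
      -k / (4 * σ) * exp (-r / (4 * σ)) := by
    intro k r
    refine ((((hasDerivAt_id' r).fun_neg.div_const (4 * σ)).exp).const_mul k).deriv.trans ?_
    ring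
  have hradial := laplacian_comp_norm_sub_sq (f := fun r => c * exp (-r / (4 * σ)))
    (by fun_prop) z x
  simp_rw [hderiv] at hradial
  rw [funext (hderiv c), hderiv] at hradial
  refine hradial.trans ?_
  rw [heatKernel]
  field_simp
  ring

theorem isCaloricAt_heatKernel (z : E) {σ : ℝ} (hσ : 0 < σ) (x : E) :
    IsCaloricAt (heatKernel z) σ x where
  contDiffAt := contDiffAt_heatKernel z hσ x
  deriv_eq := (deriv_heatKernel z hσ x).trans (laplacian_heatKernel z hσ x).symm

variable [MeasurableSpace E] [BorelSpace E]

theorem exists_finset_ball_cover_sum_radius_pow_le {K : Set E} (hK : IsCompact K) {V : ℝ}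
    (hV : volume K < ENNReal.ofReal V) :
    ∃ F : Finset (E × ℝ), (∀ q ∈ F, 0 < q.2) ∧ (∀ x ∈ K, ∃ q ∈ F, dist x q.1 ≤ 5 * q.2) ∧
      ∑ q ∈ F, q.2 ^ finrank ℝ E ≤ V / volume.real (ball (0 : E) 1) := by
  obtain ⟨F, hF, hcover, hvol⟩ := exists_finset_ball_cover hK hV
  have hunit : 0 < volume.real (ball (0 : E) 1) :=
    ENNReal.toReal_pos (measure_ball_pos _ _ one_pos).ne' measure_ball_lt_top.ne
  have hV₀ : 0 ≤ V := (ENNReal.ofReal_pos.1 (pos_of_gt hV)).le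
  have hball : ∀ q ∈ F, volume.real (ball q.1 q.2) =
      q.2 ^ finrank ℝ E * volume.real (ball (0 : E) 1) := by
    intro q hq
    rw [measureReal_def, Measure.addHaar_ball_of_pos volume _ (hF q hq), ENNReal.toReal_mul,
      ENNReal.toReal_ofReal (pow_nonneg (hF q hq).le _), ← measureReal_def]
  refine ⟨F, hF, hcover, ?_⟩
  rw [le_div_iff₀ hunit, Finset.sum_mul]
  calc ∑ q ∈ F, q.2 ^ finrank ℝ E * volume.real (ball (0 : E) 1)
      = ∑ q ∈ F, volume.real (ball q.1 q.2) := (Finset.sum_congr rfl hball).symm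
    _ = (∑ q ∈ F, volume (ball q.1 q.2)).toReal :=
        (ENNReal.toReal_sum fun q _ => measure_ball_lt_top.ne).symm
    _ ≤ V := ENNReal.toReal_le_of_le_ofReal hV₀ hvol

theorem exists_caloric_majorant {K : Set E} (hK : IsCompact K) {V : ℝ}
    (hV : volume K < ENNReal.ofReal V) :
    ∃ Φ : ℝ → E → ℝ, (∀ t ≥ 0, ∀ x, IsCaloricAt Φ t x) ∧ (∀ t ≥ 0, ∀ x, 0 ≤ Φ t x) ∧
      (∀ x ∈ K, 1 ≤ Φ 0 x) ∧
      ∀ t > 0, ∀ x, Φ t x ≤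
        exp (25 / 4) * (V / volume.real (ball (0 : E) 1)) * t ^ (-(finrank ℝ E / 2 : ℝ)) := by
  obtain ⟨F, hF, hcover, hsum⟩ := exists_finset_ball_cover_sum_radius_pow_le hK hV
  set n := finrank ℝ E
  refine ⟨fun t x => exp (25 / 4) * ∑ q ∈ F, q.2 ^ n * heatKernel q.1 (t + q.2 ^ 2) x,
    ?_, ?_, ?_, ?_⟩
  · exact fun t ht x => .const_mul _ <| .sum fun q hq => .const_mul _ <| .comp_add_const <|
      isCaloricAt_heatKernel _ (add_pos_of_nonneg_of_pos ht (pow_pos (hF q hq) 2)) x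
  · exact fun t ht x => mul_nonneg (exp_pos _).le <| Finset.sum_nonneg fun q hq =>
      mul_nonneg (pow_nonneg (hF q hq).le _) (heatKernel_nonneg _ (by positivity) x)
  · intro x hx
    obtain ⟨q, hq, hxq⟩ := hcover x hx
    calc (1 : ℝ) = exp (25 / 4) * exp (-(25 / 4)) := by rw [← exp_add]; simp
      _ ≤ exp (25 / 4) * (q.2 ^ n * heatKernel q.1 (q.2 ^ 2) x) := by
        gcongr
        exact exp_neg_le_pow_mul_heatKernel (hF q hq) hxq
      _ ≤ _ := by
        simp only [zero_add]
        gcongr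
        exact Finset.single_le_sum (f := fun q : E × ℝ => q.2 ^ n * heatKernel q.1 (q.2 ^ 2) x)
          (fun q hq => mul_nonneg (pow_nonneg (hF q hq).le _)
            (heatKernel_nonneg _ (sq_nonneg _) x)) hq
  · intro t ht x
    have hbound : ∀ q ∈ F, q.2 ^ n * heatKernel q.1 (t + q.2 ^ 2) x ≤
        q.2 ^ n * t ^ (-(n / 2 : ℝ)) := fun q hq =>
      mul_le_mul_of_nonneg_left ((heatKernel_le _ (by positivity) x).trans
        (rpow_le_rpow_of_nonpos ht (by nlinarith) (neg_nonpos.2 (by positivity))))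
        (pow_nonneg (hF q hq).le _)
    rw [mul_assoc]
    refine mul_le_mul_of_nonneg_left ?_ (exp_pos _).le
    calc _ ≤ ∑ q ∈ F, q.2 ^ n * t ^ (-(n / 2 : ℝ)) := Finset.sum_le_sum hbound
      _ = (∑ q ∈ F, q.2 ^ n) * t ^ (-(n / 2 : ℝ)) := (Finset.sum_mul ..).symm
      _ ≤ _ := by gcongr

theorem exists_caloric_barrier {K : Set E} (hK : IsCompact K) {V : ℝ}
    (hV : volume K < ENNReal.ofReal V) (t₀ : ℝ) (b : E) {ρ A : ℝ} (hρ : 0 < ρ) (hA : 0 ≤ A)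
    (e : ℝ) :
    ∃ W : ℝ → E → ℝ, (∀ t ≥ t₀, ∀ x, IsCaloricAt W t x) ∧ (∀ t ≥ t₀, ∀ x, e ≤ W t x) ∧
      (∀ x ∈ K, e + A ≤ W t₀ x) ∧ (∀ t ≥ t₀, ∀ x ∈ sphere b ρ, e + A ≤ W t x) ∧
      ∀ h > 0, W (t₀ + h) b ≤ e + A / ρ ^ 2 * (2 * finrank ℝ E * h) +
        A * (exp (25 / 4) * (V / volume.real (ball (0 : E) 1)) *
          h ^ (-(finrank ℝ E / 2 : ℝ))) := by
  obtain ⟨Φ, hΦ, hΦ_nonneg, hΦ_one, hΦ_le⟩ := exists_caloric_majorant hK hV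
  set n := finrank ℝ E
  have hshift : ∀ t ≥ t₀, 0 ≤ t + -t₀ := fun t ht => by linarith
  have hdrift : ∀ t ≥ t₀, ∀ x, A / ρ ^ 2 * ‖x - b‖ ^ 2 ≤
      A / ρ ^ 2 * (‖x - b‖ ^ 2 + 2 * n * (t + -t₀)) := fun t ht x =>
    mul_le_mul_of_nonneg_left
      (le_add_of_nonneg_right (mul_nonneg (by positivity) (hshift t ht))) (by positivity)
  have hquad : ∀ x, 0 ≤ A / ρ ^ 2 * ‖x - b‖ ^ 2 := fun x => by positivity
  have hAΦ : ∀ t ≥ t₀, ∀ x, 0 ≤ A * Φ (t + -t₀) x := fun t ht x =>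
    mul_nonneg hA (hΦ_nonneg _ (hshift t ht) x)
  refine ⟨fun t x => e + A / ρ ^ 2 * (‖x - b‖ ^ 2 + 2 * n * (t + -t₀)) + A * Φ (t + -t₀) x,
    ?_, ?_, ?_, ?_, ?_⟩
  · exact fun t ht x => ((IsCaloricAt.const e t x).add
      ((isCaloricAt_norm_sub_sq b _ x).comp_add_const.const_mul (A / ρ ^ 2))).add
      ((hΦ _ (hshift t ht) x).comp_add_const.const_mul A)
  · exact fun t ht x => by linarith [hdrift t ht x, hquad x, hAΦ t ht x]
  · intro x hx
    have hone : 1 ≤ Φ (t₀ + -t₀) x := by simpa using hΦ_one x hx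
    linarith [hdrift t₀ le_rfl x, hquad x, le_mul_of_one_le_right hA hone]
  · intro t ht x hx
    have hsphere : A / ρ ^ 2 * ‖x - b‖ ^ 2 = A := by
      rw [← dist_eq_norm, mem_sphere.1 hx]
      field_simp
    linarith [hdrift t ht x, hAΦ t ht x]
  · intro h hh
    have hΦ_center := hΦ_le h hh b
    simp only [sub_self, norm_zero, ne_eq, OfNat.ofNat_ne_zero, not_false_eq_true, zero_pow,
      zero_add, add_neg_cancel_comm]
    gcongr

end Caloric

section Smoothing

theorem measure_lt_of_lintegral_rpow_lt {X : Type*} [MeasurableSpace X] {μ : Measure X} {K : Set X}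
    (hK : MeasurableSet K) {f : X → ℝ} {e q c : ℝ} (he : 0 < e) (hq : 0 ≤ q)
    (hf : ∀ x ∈ K, e ≤ |f x|)
    (hint : ∫⁻ x in K, ENNReal.ofReal (|f x| ^ q) ∂μ < ENNReal.ofReal c) :
    μ K < ENNReal.ofReal (c / e ^ q) := by
  have heq : 0 < e ^ q := rpow_pos_of_pos he q
  rw [ENNReal.ofReal_div_of_pos heq, ENNReal.lt_div_iff_mul_lt (by simp [heq]) (by simp), mul_comm]
  calc ENNReal.ofReal (e ^ q) * μ K = ∫⁻ _ in K, ENNReal.ofReal (e ^ q) ∂μ :=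
        (setLIntegral_const ..).symm
    _ ≤ ∫⁻ x in K, ENNReal.ofReal (|f x| ^ q) ∂μ := setLIntegral_mono' hK fun x hx =>
        ENNReal.ofReal_le_ofReal (rpow_le_rpow he.le (hf x hx) hq)
    _ < ENNReal.ofReal c := hint

theorem mul_rpow_neg_inv_rpow {p M D : ℝ} (hp : 1 < p) (hM : 0 ≤ M) (hD : 0 < D) :
    (M * D ^ (-(1 / (p - 1)))) ^ (p - 1) = M ^ (p - 1) / D := by
  have hexp : -(1 / (p - 1)) * (p - 1) = -1 := by
    have : p - 1 ≠ 0 := (sub_pos.2 hp).ne'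
    field_simp
  rw [mul_rpow hM (rpow_nonneg hD.le _), ← rpow_mul hD.le, hexp, rpow_neg_one, div_eq_mul_inv]

theorem mul_rpow_neg_inv_rpow_critical {p e h : ℝ} (hp : 1 < p) (he : 0 ≤ e) (hh : 0 < h) (n : ℝ) :
    (e * h ^ (-(1 / (p - 1)))) ^ (n * (p - 1) / 2) =
      e ^ (n * (p - 1) / 2) * h ^ (-(n / 2)) := by
  have hp' : p - 1 ≠ 0 := (sub_pos.2 hp).ne'
  rw [mul_rpow he (rpow_nonneg hh.le _), ← rpow_mul hh.le]
  congr 2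
  field_simp

/-- The one-sided type I bound `v(t) ≤ M (T - t)^{-β}` on `(0,T) × Ω`, with `β = 1/(p-1)`. -/
def TypeIBound {E : Type*} (Ω : Set E) (p T M : ℝ) (v : ℝ → E → ℝ) : Prop :=
  ∀ t ∈ Ioo 0 T, ∀ x ∈ Ω, v t x ≤ M * (T - t) ^ (-(1 / (p - 1)))

theorem TypeIBound.le_of_le_sub {E : Type*} {Ω : Set E} {p T M : ℝ} {v : ℝ → E → ℝ}
    (hI : TypeIBound Ω p T M v) (hp : 1 ≤ p) (hM : 0 ≤ M) {t h : ℝ} (ht : 0 < t)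
    (hh : 0 < h) (hT : h ≤ T - t) {x : E} (hx : x ∈ Ω) : v t x ≤ M * h ^ (-(1 / (p - 1))) :=
  (hI t ⟨ht, by linarith⟩ x hx).trans <| mul_le_mul_of_nonneg_left
    (rpow_le_rpow_of_nonpos hh hT (neg_nonpos.2 (one_div_nonneg.2 (sub_nonneg.2 hp)))) hM

variable {E : Type*} [NormedAddCommGroup E] [InnerProductSpace ℝ E] [FiniteDimensional ℝ E]

namespace IsClassicalSubsol

variable {Ω : Set E} {p T : ℝ} {v : ℝ → E → ℝ}

theorem lt_exp_mul_of_isCaloricAt (hv : IsClassicalSubsol Ω p T v) (hΩ : IsOpen Ω) (hp : 1 ≤ p)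
    {t₁ t₂ : ℝ} (ht₁ : 0 < t₁) (ht₂ : t₂ < T) {b : E} {ρ A μ : ℝ} (hA : 0 ≤ A)
    (hvA : ∀ t ∈ Icc t₁ t₂, ∀ x ∈ Ω ∩ ball b ρ, v t x ≤ A) (hμ : A ^ (p - 1) < μ)
    {V : ℝ → E → ℝ} (hV : ∀ t ∈ Icc t₁ t₂, ∀ x, IsCaloricAt V t x)
    (hVpos : ∀ t ∈ Icc t₁ t₂, ∀ x, 0 < V t x)
    (hinit : ∀ x ∈ Ω ∩ closedBall b ρ, v t₁ x < V t₁ x)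
    (hside : ∀ t ∈ Icc t₁ t₂, ∀ x ∈ Ω ∩ sphere b ρ, v t x < V t x) :
    ∀ t ∈ Icc t₁ t₂, ∀ x ∈ Ω ∩ ball b ρ, v t x < exp (μ * (t - t₁)) * V t x := by
  have hWpos : ∀ t ∈ Icc t₁ t₂, ∀ x, 0 < exp (μ * (t - t₁)) * V t x := fun t ht x =>
    mul_pos (exp_pos _) (hVpos t ht x)
  refine hv.lt_of_barrier hΩ ht₁ ht₂ ?_ hWpos ?_ ?_ ?_
  · exact fun t ht x => ContDiffAt.mul (by fun_prop) (hV t ht x).contDiffAt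
  · exact fun x hx => by simpa using hinit x hx
  · intro t ht x hx
    have hexp : 1 ≤ exp (μ * (t - t₁)) :=
      one_le_exp (mul_nonneg ((rpow_nonneg hA _).trans hμ.le) (sub_nonneg.2 ht.1))
    exact (hside t ht x hx).trans_le (le_mul_of_one_le_left (hVpos t ht x).le hexp)
  · intro t ht x hx hcontact
    have hexp : HasDerivAt (fun τ => exp (μ * (τ - t₁))) (exp (μ * (t - t₁)) * (μ * 1)) t :=
      (((hasDerivAt_id' t).sub_const t₁).const_mul μ).exp
    have hVt : HasDerivAt (fun τ => V τ x) (Δ (V t) x) t := (hV t ht x).deriv_eq ▸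
      ((contDiffAt_slice_time (hV t ht x).contDiffAt).differentiableAt two_ne_zero).hasDerivAt
    have hpot : (exp (μ * (t - t₁)) * V t x) ^ (p - 1) < μ := (rpow_le_rpow (hWpos t ht x).le
      (hcontact ▸ hvA t ht x hx) (sub_nonneg.2 hp)).trans_lt hμ
    rw [laplacian_const_mul _ (contDiffAt_slice_space (hV t ht x).contDiffAt),
      (hexp.fun_mul hVt).deriv]
    linarith [mul_lt_mul_of_pos_right hpot (hWpos t ht x)]

theorem isCompact_superlevel (hv : IsClassicalSubsol Ω p T v) {t : ℝ} (ht : t ∈ Ioo 0 T) (b : E)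
    (ρ e : ℝ) : IsCompact {x ∈ closure Ω ∩ closedBall b ρ | e ≤ v t x} := by
  have hK : IsCompact (closure Ω ∩ closedBall b ρ) :=
    (isCompact_closedBall b ρ).inter_left isClosed_closure
  have hcont : ContinuousOn (v t) (closure Ω ∩ closedBall b ρ) :=
    hv.continuousOn.comp (f := fun x => (t, x)) (by fun_prop) fun x hx => ⟨ht, hx.1⟩
  exact hK.of_isClosed_subset
    (hcont.preimage_isClosed_of_isClosed hK.isClosed (isClosed_Ici (a := e))) inter_subset_left

variable [MeasurableSpace E] [BorelSpace E]

theorem lt_of_volume_superlevel_lt (hv : IsClassicalSubsol Ω p T v) (hΩ : IsOpen Ω) (hp : 1 ≤ p)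
    {t₀ h : ℝ} (ht₀ : 0 < t₀) (hh : 0 < h) (hT : t₀ + h < T) {b : E} (hb : b ∈ Ω) {ρ A μ e V : ℝ}
    (hρ : 0 < ρ) (hA : 0 ≤ A) (he : 0 < e)
    (hvA : ∀ t ∈ Icc t₀ (t₀ + h), ∀ x ∈ Ω, v t x ≤ A) (hμ : A ^ (p - 1) < μ)
    (hV : volume {x ∈ closure Ω ∩ closedBall b ρ | e ≤ v t₀ x} < ENNReal.ofReal V) :
    v (t₀ + h) b < exp (μ * h) * (e + A / ρ ^ 2 * (2 * finrank ℝ E * h) +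
      A * (exp (25 / 4) * (V / volume.real (ball (0 : E) 1)) *
        h ^ (-(finrank ℝ E / 2 : ℝ)))) := by
  have hK := hv.isCompact_superlevel ⟨ht₀, by linarith⟩ b ρ e
  obtain ⟨W, hW, hW_ge, hW_initial, hW_sphere, hW_center⟩ :=
    exists_caloric_barrier hK hV t₀ b hρ hA e
  have hstart : t₀ ∈ Icc t₀ (t₀ + h) := ⟨le_rfl, by linarith⟩
  have hend : t₀ + h ∈ Icc t₀ (t₀ + h) := ⟨by linarith, le_rfl⟩
  have hcompare := hv.lt_exp_mul_of_isCaloricAt hΩ hp ht₀ hT (b := b) (ρ := ρ) hA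
    (fun t ht x hx => hvA t ht x hx.1) hμ (fun t ht => hW t ht.1)
    (fun t ht x => he.trans_le (hW_ge t ht.1 x)) ?_ ?_ _ hend b ⟨hb, mem_ball_self hρ⟩
  · rw [add_sub_cancel_left] at hcompare
    exact hcompare.trans_le (mul_le_mul_of_nonneg_left (hW_center h hh) (exp_pos _).le)
  · intro x hx
    by_cases hxe : e ≤ v t₀ x
    · linarith [hvA t₀ hstart x hx.1, hW_initial x ⟨⟨subset_closure hx.1, hx.2⟩, hxe⟩]
    · linarith [hW_ge t₀ le_rfl x]
  · exact fun t ht x hx => by linarith [hvA t ht x hx.1, hW_sphere t ht.1 x hx.2]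

theorem volume_superlevel_lt (hv : IsClassicalSubsol Ω p T v) (hΩ : IsOpen Ω) {t : ℝ}
    (ht : t ∈ Ioo 0 T) {b : E} {ρ e q c : ℝ} (he : 0 < e) (hq : 0 ≤ q)
    (hint : ∫⁻ x in Ω ∩ closedBall b ρ, ENNReal.ofReal (|v t x| ^ q) < ENNReal.ofReal c) :
    volume {x ∈ closure Ω ∩ closedBall b ρ | e ≤ v t x} < ENNReal.ofReal (c / e ^ q) := by
  have hsub : {x ∈ closure Ω ∩ closedBall b ρ | e ≤ v t x} ⊆ Ω ∩ closedBall b ρ := by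
    rintro x ⟨⟨hxΩ, hxρ⟩, hxe⟩
    refine ⟨by_contra fun hx => ?_, hxρ⟩
    exact (hxe.trans (hv.nonpos_of_mem_frontier t ht x (hΩ.frontier_eq ▸ ⟨hxΩ, hx⟩))).not_gt he
  exact measure_lt_of_lintegral_rpow_lt (hv.isCompact_superlevel ht b ρ e).measurableSet he hq
    (fun x hx => hx.2.trans (le_abs_self _)) ((lintegral_mono_set hsub).trans_lt hint)

theorem lt_of_lintegral_rpow_lt (hv : IsClassicalSubsol Ω p T v) (hΩ : IsOpen Ω) (hp : 1 < p)
    {M : ℝ} (hM : 0 ≤ M) (hI : TypeIBound Ω p T M v) {t₀ h : ℝ} (ht₀ : 0 < t₀) (hh : 0 < h)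
    (hT : t₀ + 2 * h ≤ T) {b : E} (hb : b ∈ Ω) {ρ e c : ℝ} (hρ : 0 < ρ) (he : 0 < e)
    (hwide : M * (2 * finrank ℝ E * h) ≤ e * ρ ^ 2)
    (hint : ∫⁻ x in Ω ∩ closedBall b ρ,
      ENNReal.ofReal (|v t₀ x| ^ ((finrank ℝ E : ℝ) * (p - 1) / 2)) < ENNReal.ofReal c) :
    v (t₀ + h) b < exp (M ^ (p - 1) + 1) * (e + e + M * (exp (25 / 4) *
      (c / e ^ ((finrank ℝ E : ℝ) * (p - 1) / 2) / volume.real (ball (0 : E) 1)))) *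
      h ^ (-(1 / (p - 1))) := by
  set n := finrank ℝ E
  set q := (n : ℝ) * (p - 1) / 2
  have hq : 0 ≤ q := div_nonneg (mul_nonneg n.cast_nonneg (sub_pos.2 hp).le) zero_le_two
  set S := h ^ (-(1 / (p - 1)))
  have hS : 0 < S := rpow_pos_of_pos hh _
  have hbound : ∀ t ∈ Icc t₀ (t₀ + h), ∀ x ∈ Ω, v t x ≤ M * S := fun t ht x hx =>
    hI.le_of_le_sub hp.le hM (ht₀.trans_le ht.1) hh (by linarith [ht.2]) hx
  have hrate : (M * S) ^ (p - 1) < (M ^ (p - 1) + 1) / h := by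
    rw [mul_rpow_neg_inv_rpow hp hM hh]
    gcongr
    linarith
  have hquad : M * S / ρ ^ 2 * (2 * n * h) ≤ e * S := by
    rw [div_mul_eq_mul_div, div_le_iff₀ (by positivity)]
    linarith [mul_le_mul_of_nonneg_right hwide hS.le]
  have hmain := hv.lt_of_volume_superlevel_lt hΩ hp.le ht₀ hh (by linarith) hb hρ
    (mul_nonneg hM hS.le) (mul_pos he hS) hbound hrate
    (hv.volume_superlevel_lt hΩ ⟨ht₀, by linarith⟩ (mul_pos he hS) hq hint)
  rw [mul_rpow_neg_inv_rpow_critical hp he.le hh, div_mul_cancel₀ _ hh.ne'] at hmain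
  have hcancel : M * S * (exp (25 / 4) * (c / (e ^ q * h ^ (-(n / 2 : ℝ))) /
      volume.real (ball (0 : E) 1)) * h ^ (-(n / 2 : ℝ))) =
      M * (exp (25 / 4) * (c / e ^ q / volume.real (ball (0 : E) 1))) * S := by
    have := rpow_pos_of_pos hh (-(n / 2 : ℝ))
    field_simp
  rw [hcancel] at hmain
  refine hmain.trans_le ?_
  rw [mul_assoc (exp _)]
  exact mul_le_mul_of_nonneg_left (by linarith) (exp_pos _).le

variable (E) in
theorem exists_smoothing {M ε : ℝ} (hp : 1 < p) (hM : 0 < M) (hε : 0 < ε) :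
    ∃ c > 0, ∃ R > 0, ∀ (Ω : Set E) (T : ℝ) (v : ℝ → E → ℝ), IsOpen Ω →
      IsClassicalSubsol Ω p T v → TypeIBound Ω p T M v →
      ∀ t₀ > 0, ∀ h > 0, t₀ + 2 * h ≤ T → ∀ b ∈ Ω, ∀ ρ > 0, R * h ≤ ρ ^ 2 →
      ∫⁻ x in Ω ∩ closedBall b ρ,
        ENNReal.ofReal (|v t₀ x| ^ ((finrank ℝ E : ℝ) * (p - 1) / 2)) < ENNReal.ofReal c →
      v (t₀ + h) b < ε * h ^ (-(1 / (p - 1))) := by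
  set n := finrank ℝ E
  set L := exp (M ^ (p - 1) + 1)
  set e := ε / (3 * L)
  have he : 0 < e := by positivity
  set ω := volume.real (ball (0 : E) 1)
  have hω : 0 < ω := ENNReal.toReal_pos (measure_ball_pos _ _ one_pos).ne' measure_ball_lt_top.ne
  set c := e * (e ^ ((n : ℝ) * (p - 1) / 2) * ω) / (M * exp (25 / 4))
  refine ⟨c, by positivity, (2 * n * M + 1) / e, by positivity, ?_⟩
  intro Ω T v hΩ hv hI t₀ ht₀ h hh hT b hb ρ hρ hR hint
  have hwide : M * (2 * n * h) ≤ e * ρ ^ 2 := by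
    rw [div_mul_eq_mul_div, div_le_iff₀ he] at hR
    linarith
  have hc : M * (exp (25 / 4) * (c / e ^ ((n : ℝ) * (p - 1) / 2) / ω)) = e := by
    simp only [c]
    field_simp
  have hsum : L * (e + e + e) = ε := by
    simp only [e]
    field_simp [show L ≠ 0 from (exp_pos _).ne']
    norm_num
  have hmain := hv.lt_of_lintegral_rpow_lt hΩ hp hM.le hI ht₀ hh hT hb hρ he hwide hint
  rwa [hc, hsum] at hmain

end IsClassicalSubsol

end Smoothing

section Propagation

theorem half_pow_add_mul_funnel_lt {m : ℕ} {d ξ q B : ℝ} (hd : 0 < d) (hd₁ : d ≤ 1) (hξ : 0 ≤ ξ)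
    (hB : 0 ≤ B) (hm : 3 * B ≤ m) (hq : q ≤ B / d) (hq₁ : d * ξ ^ (m + 2) ≤ 1 → q ≤ 1 / 7) :
    1 / 2 * ξ ^ (m + 1) + q * (2 - d + d * ξ ^ (m + 2)) < 1 + (m + 1) * ξ ^ (m + 2) := by
  have hpow : ξ ^ (m + 1) ≤ 1 + ξ ^ (m + 2) := by
    rcases le_total ξ 1 with h | h
    · exact (pow_le_one₀ hξ h).trans (le_add_of_nonneg_right (pow_nonneg hξ _))
    · exact (pow_le_pow_right₀ h (by simp)).trans (le_add_of_nonneg_left zero_le_one)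
  have hX : 0 ≤ ξ ^ (m + 2) := pow_nonneg hξ _
  set X := ξ ^ (m + 2)
  have hmX : 0 ≤ m * X := by positivity
  have hF : 0 ≤ 2 - d + d * X := by linarith [mul_nonneg hd.le hX]
  -- For the funnel, `q` is the reaction coefficient times `s`. It is small in the inner region
  -- `d X ≤ 1`; in the outer one the type I bound `q ≤ B / d` is absorbed by the term `m X`.
  rcases le_total (d * X) 1 with hdX | hdX
  · have hsmall : q * (2 - d + d * X) ≤ 3 / 7 :=
      calc q * (2 - d + d * X) ≤ 1 / 7 * 3 :=
            mul_le_mul (hq₁ hdX) (by linarith) hF (by norm_num)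
        _ = 3 / 7 := by norm_num
    linarith
  · have hlarge : q * (2 - d + d * X) ≤ m * X :=
      calc q * (2 - d + d * X) ≤ B / d * (3 * (d * X)) :=
            mul_le_mul hq (by linarith) hF (by positivity)
        _ = 3 * B * X := by field_simp
        _ ≤ m * X := by gcongr
    linarith

variable {E : Type*} [NormedAddCommGroup E]

/-- The barrier `2 - d + d ξ^{m+2}` with `d = (T - t)/s` and `ξ = |x - b|²/(K (T - t))`. At `x = b`
it stays below `2` up to time `T`, while along `|x - b|² ~ K s` it grows like `(T - t)^{-(m+1)}`,
faster than the type I rate once `m` is large. -/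
def funnel (m : ℕ) (K s T : ℝ) (b : E) (t : ℝ) (x : E) : ℝ :=
  2 - (T - t) / s + (T - t) / s * (‖x - b‖ ^ 2 / (K * (T - t))) ^ (m + 2)

variable {m : ℕ} {K s T t : ℝ} {b x : E}

theorem one_le_funnel (hK : 0 ≤ K) (hs : 0 < s) (ht : t ∈ Icc (T - s) T) :
    1 ≤ funnel m K s T b t x := by
  have hσ : 0 ≤ T - t := sub_nonneg.2 ht.2
  have hd : (T - t) / s ≤ 1 := (div_le_one hs).2 (by linarith [ht.1])
  have hgrowth : 0 ≤ (T - t) / s * (‖x - b‖ ^ 2 / (K * (T - t))) ^ (m + 2) := by positivity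
  rw [funnel]
  linarith

theorem funnel_center_lt (hs : 0 < s) (ht : t < T) : funnel m K s T b t b < 2 := by
  simpa [funnel] using div_pos (sub_pos.2 ht) hs

theorem mul_rpow_lt_funnel {β R : ℝ} (hK : 0 < K) (hs : 0 < s) (ht : t ∈ Ico (T - s) T)
    (hβ : β ≤ m + 1) (hR : 1 ≤ R) (hx : K * R * s ≤ ‖x - b‖ ^ 2) :
    R * ((T - t) / s) ^ (-β) < funnel m K s T b t x := by
  have hσ : 0 < T - t := sub_pos.2 ht.2
  have hd₁ : (T - t) / s ≤ 1 := (div_le_one hs).2 (by linarith [ht.1])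
  have hRξ : R / ((T - t) / s) ≤ ‖x - b‖ ^ 2 / (K * (T - t)) := by
    rw [le_div_iff₀ (by positivity)]
    refine le_trans (le_of_eq ?_) hx
    field_simp
  rw [funnel]
  set d := (T - t) / s
  have hd : 0 < d := div_pos hσ hs
  have hgrowth : R * d ^ (-β) ≤ d * (‖x - b‖ ^ 2 / (K * (T - t))) ^ (m + 2) :=
    calc R * d ^ (-β) ≤ R ^ (m + 2) * d ^ (-((m + 1 : ℕ) : ℝ)) := by
          gcongr ?_ * ?_
          · exact le_self_pow₀ hR (by simp)
          · exact rpow_le_rpow_of_exponent_ge hd hd₁ (by push_cast; linarith)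
      _ = d * (R / d) ^ (m + 2) := by
          rw [rpow_neg hd.le, rpow_natCast, div_pow R d, pow_succ d (m + 1)]
          field_simp
      _ ≤ d * (‖x - b‖ ^ 2 / (K * (T - t))) ^ (m + 2) := by gcongr
  linarith

theorem mul_rpow_lt_mul_funnel {β R M ε : ℝ} (hK : 0 < K) (hs : 0 < s) (ht : t ∈ Ico (T - s) T)
    (hβ : β ≤ m + 1) (hR : 1 ≤ R) (hε : 0 < ε) (hM : M ≤ ε * R) (hx : K * R * s ≤ ‖x - b‖ ^ 2) :
    M * (T - t) ^ (-β) < ε * s ^ (-β) * funnel m K s T b t x := by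
  have hd : 0 < (T - t) / s := div_pos (sub_pos.2 ht.2) hs
  have : 0 < s ^ (-β) := rpow_pos_of_pos hs _
  calc M * (T - t) ^ (-β) = M * (s ^ (-β) * ((T - t) / s) ^ (-β)) := by
        rw [← mul_rpow hs.le hd.le, mul_div_cancel₀ _ hs.ne']
    _ ≤ ε * R * (s ^ (-β) * ((T - t) / s) ^ (-β)) := by gcongr
    _ = ε * s ^ (-β) * (R * ((T - t) / s) ^ (-β)) := by ring
    _ < ε * s ^ (-β) * funnel m K s T b t x := by
        gcongr
        exact mul_rpow_lt_funnel hK hs ht hβ hR hx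

theorem deriv_funnel (hK : K ≠ 0) (ht : t ≠ T) :
    deriv (fun τ => funnel m K s T b τ x) t =
      1 / s * (1 + (m + 1) * (‖x - b‖ ^ 2 / (K * (T - t))) ^ (m + 2)) := by
  have hσ : T - t ≠ 0 := sub_ne_zero.2 ht.symm
  set ξ := ‖x - b‖ ^ 2 / (K * (T - t)) with hξ_def
  have hsub : HasDerivAt (fun τ => T - τ) (-1) t := (hasDerivAt_id' t).const_sub T
  have hξ : HasDerivAt (fun τ => ‖x - b‖ ^ 2 / (K * (T - τ))) (ξ / (T - t)) t := by
    refine ((hasDerivAt_const t _).fun_div (hsub.const_mul K) (by positivity)).congr_deriv ?_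
    rw [hξ_def]
    field_simp
    ring
  refine (((hsub.div_const s).const_sub 2).fun_add
    ((hsub.div_const s).fun_mul (hξ.fun_pow (m + 2)))).deriv.trans ?_
  rw [← hξ_def]
  push_cast
  field_simp
  ring

variable [InnerProductSpace ℝ E]

theorem contDiffAt_funnel (hK : K ≠ 0) (ht : t ≠ T) :
    ContDiffAt ℝ 2 (uncurry (funnel m K s T b)) (t, x) := by
  have hquot : ContDiffAt ℝ 2 (fun q : ℝ × E => ‖q.2 - b‖ ^ 2 / (K * (T - q.1))) (t, x) :=
    ((contDiffAt_snd.sub contDiffAt_const).norm_sq ℝ).div (by fun_prop)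
      (mul_ne_zero hK (sub_ne_zero.2 ht.symm))
  have hd : ContDiffAt ℝ 2 (fun q : ℝ × E => (T - q.1) / s) (t, x) := by fun_prop
  exact (contDiffAt_const.sub hd).add (hd.mul (hquot.pow (m + 2)))

variable [FiniteDimensional ℝ E]

theorem laplacian_const_add_mul_norm_sq_div_pow (c k : ℝ) {a : ℝ} (ha : a ≠ 0) :
    Δ (fun y => c + k * (‖y - b‖ ^ 2 / a) ^ (m + 2)) x =
      k / a * (4 * ((m + 2) * (m + 1)) + 2 * finrank ℝ E * (m + 2)) *
        (‖x - b‖ ^ 2 / a) ^ (m + 1) := by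
  have hderiv : ∀ (k r : ℝ) (j : ℕ),
      deriv (fun r => k * (r / a) ^ (j + 1)) r = k * (j + 1) / a * (r / a) ^ j := by
    intro k r j
    refine ((((hasDerivAt_id' r).div_const a).fun_pow (j + 1)).const_mul k).deriv.trans ?_
    push_cast
    ring
  have hradial := laplacian_comp_norm_sub_sq (f := fun r => c + k * (r / a) ^ (m + 2))
    (by fun_prop) b x
  have hfirst : deriv (fun r => c + k * (r / a) ^ (m + 2)) =
      fun r => k * ((m + 1 : ℕ) + 1) / a * (r / a) ^ (m + 1) :=
    funext fun r => (deriv_const_add c).trans (hderiv k r (m + 1))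
  rw [hfirst, hderiv] at hradial
  refine hradial.trans ?_
  set ξ := ‖x - b‖ ^ 2 / a
  rw [show ‖x - b‖ ^ 2 = ξ * a from (div_mul_cancel₀ _ ha).symm]
  push_cast
  field_simp
  ring

theorem laplacian_funnel (hs : s ≠ 0) (ht : t ≠ T)
    (hK : K = 2 * (4 * ((m + 2) * (m + 1)) + 2 * finrank ℝ E * (m + 2))) :
    Δ (funnel m K s T b t) x = 1 / s * (1 / 2 * (‖x - b‖ ^ 2 / (K * (T - t))) ^ (m + 1)) := by
  have hσ : T - t ≠ 0 := sub_ne_zero.2 ht.symm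
  have hK₀ : K ≠ 0 := by rw [hK]; positivity
  refine (laplacian_const_add_mul_norm_sq_div_pow _ _ (mul_ne_zero hK₀ hσ)).trans ?_
  rw [show 4 * ((m + 2) * (m + 1)) + 2 * finrank ℝ E * (m + 2) = K / 2 by rw [hK]; ring]
  field_simp

theorem laplacian_add_rpow_mul_lt_deriv_funnel {p c B : ℝ} (hp : 1 ≤ p) (hs : 0 < s)
    (ht : t ∈ Ico (T - s) T)
    (hK : K = 2 * (4 * ((m + 2) * (m + 1)) + 2 * finrank ℝ E * (m + 2))) (hc : 0 < c)
    (hcs : (3 * c) ^ (p - 1) ≤ 1 / 7 / s) (hB : 0 ≤ B) (hm : 3 * B ≤ m)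
    (hcB : (c * funnel m K s T b t x) ^ (p - 1) ≤ B / (T - t)) :
    Δ (fun y => c * funnel m K s T b t y) x +
        (c * funnel m K s T b t x) ^ (p - 1) * (c * funnel m K s T b t x) <
      deriv (fun τ => c * funnel m K s T b τ x) t := by
  have hK₀ : 0 < K := by rw [hK]; positivity
  have hσ : 0 < T - t := sub_pos.2 ht.2
  have hd₁ : (T - t) / s ≤ 1 := (div_le_one hs).2 (by linarith [ht.1])
  have hF : 0 ≤ c * funnel m K s T b t x :=
    mul_nonneg hc.le (zero_le_one.trans (one_le_funnel hK₀.le hs ⟨ht.1, ht.2.le⟩))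
  have hreaction := half_pow_add_mul_funnel_lt (m := m) (ξ := ‖x - b‖ ^ 2 / (K * (T - t)))
    (q := s * (c * funnel m K s T b t x) ^ (p - 1)) (div_pos hσ hs) hd₁ (by positivity) hB hm
    (by rw [div_div_eq_mul_div, mul_comm B, mul_div_assoc]; gcongr) fun hdξ => by
      have hthree : c * funnel m K s T b t x ≤ 3 * c := by
        rw [mul_comm 3]
        refine mul_le_mul_of_nonneg_left ?_ hc.le
        rw [funnel]
        linarith [div_pos hσ hs]
      calc s * (c * funnel m K s T b t x) ^ (p - 1) ≤ s * (1 / 7 / s) := by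
            gcongr
            exact (rpow_le_rpow hF hthree (sub_nonneg.2 hp)).trans hcs
        _ = 1 / 7 := by field_simp
  rw [laplacian_const_mul c (contDiffAt_slice_space (contDiffAt_funnel hK₀.ne' ht.2.ne)),
    laplacian_funnel hs.ne' ht.2.ne hK, deriv_const_mul_field,
    deriv_funnel hK₀.ne' ht.2.ne]
  have hscaled := mul_lt_mul_of_pos_left hreaction (div_pos hc hs)
  refine lt_of_le_of_lt (le_of_eq ?_) (hscaled.trans_eq ?_)
  · rw [funnel]
    field_simp
  · field_simp

namespace IsClassicalSubsol

variable {Ω : Set E} {p : ℝ} {v : ℝ → E → ℝ}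

theorem lt_of_funnel (hv : IsClassicalSubsol Ω p T v) (hΩ : IsOpen Ω) (hp : 1 < p) {M : ℝ}
    (hM : 0 ≤ M) (hI : TypeIBound Ω p T M v) {ε R ρ : ℝ} (hε : 0 < ε)
    (hε₇ : (3 * ε) ^ (p - 1) ≤ 1 / 7) (hm : 3 * M ^ (p - 1) ≤ m) (hβ : 1 / (p - 1) ≤ m + 1)
    (hK : K = 2 * (4 * ((m + 2) * (m + 1)) + 2 * finrank ℝ E * (m + 2))) (hR : 1 ≤ R)
    (hMR : M ≤ ε * R) (hs : 0 < s) (hsT : s < T) (hb : b ∈ Ω) (hρ : 0 < ρ)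
    (hwide : K * R * s ≤ ρ ^ 2)
    (hinit : ∀ x ∈ Ω ∩ closedBall b ρ, v (T - s) x < ε * s ^ (-(1 / (p - 1)))) :
    ∀ t ∈ Ico (T - s) T, v t b < 2 * ε * s ^ (-(1 / (p - 1))) := by
  set c := ε * s ^ (-(1 / (p - 1))) with hc_def
  have hc : 0 < c := mul_pos hε (rpow_pos_of_pos hs _)
  have hK₀ : 0 < K := by rw [hK]; positivity
  intro t ht
  have htime : ∀ τ ∈ Icc (T - s) t, τ ∈ Ico (T - s) T := fun τ hτ => ⟨hτ.1, hτ.2.trans_lt ht.2⟩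
  have htypeI : ∀ τ ∈ Ico (T - s) T, ∀ x ∈ Ω, v τ x ≤ M * (T - τ) ^ (-(1 / (p - 1))) :=
    fun τ hτ x hx => hI τ ⟨by linarith [hτ.1], hτ.2⟩ x hx
  have hF : ∀ τ ∈ Ico (T - s) T, ∀ x, 1 ≤ funnel m K s T b τ x := fun τ hτ x =>
    one_le_funnel hK₀.le hs ⟨hτ.1, hτ.2.le⟩
  have hcompare := hv.lt_of_barrier hΩ (t₁ := T - s) (sub_pos.2 hsT) ht.2 (b := b) (ρ := ρ)
    (W := fun τ x => c * funnel m K s T b τ x)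
    (fun τ hτ x => contDiffAt_const.mul (contDiffAt_funnel hK₀.ne' (htime τ hτ).2.ne))
    (fun τ hτ x => mul_pos hc (one_pos.trans_le (hF τ (htime τ hτ) x))) ?_ ?_ ?_
    t ⟨ht.1, le_rfl⟩ b ⟨hb, mem_ball_self hρ⟩
  · refine hcompare.trans ?_
    linarith [mul_lt_mul_of_pos_left (funnel_center_lt (m := m) (K := K) (b := b) hs ht.2) hc]
  · intro x hx
    have hstart : T - s ∈ Ico (T - s) T := ⟨le_rfl, by linarith⟩
    exact (hinit x hx).trans_le (le_mul_of_one_le_right hc.le (hF _ hstart x))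
  · intro τ hτ x hx
    refine (htypeI τ (htime τ hτ) x hx.1).trans_lt
      (mul_rpow_lt_mul_funnel hK₀ hs (htime τ hτ) hβ hR hε hMR ?_)
    rwa [← dist_eq_norm, mem_sphere.1 hx.2]
  · intro τ hτ x hx hcontact
    have hσ : 0 < T - τ := sub_pos.2 (htime τ hτ).2
    refine laplacian_add_rpow_mul_lt_deriv_funnel hp.le hs (htime τ hτ) hK hc ?_
      (rpow_nonneg hM _) hm ?_
    · rw [hc_def, ← mul_assoc, mul_rpow_neg_inv_rpow hp (by positivity) hs]
      gcongr
    · rw [← mul_rpow_neg_inv_rpow hp hM hσ, ← hcontact]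
      exact rpow_le_rpow (hcontact ▸ (mul_pos hc (one_pos.trans_le (hF τ (htime τ hτ) x))).le)
        (htypeI τ (htime τ hτ) x hx.1) (sub_pos.2 hp).le

variable (E) in
theorem exists_propagation {M : ℝ} (hp : 1 < p) (hM : 0 < M) :
    ∃ ε > 0, ∃ R > 0, ∀ (Ω : Set E) (T : ℝ) (v : ℝ → E → ℝ), IsOpen Ω →
      IsClassicalSubsol Ω p T v → TypeIBound Ω p T M v →
      ∀ s > 0, s < T → ∀ b ∈ Ω, ∀ ρ > 0, R * s ≤ ρ ^ 2 →
      (∀ x ∈ Ω ∩ closedBall b ρ, v (T - s) x < ε * s ^ (-(1 / (p - 1)))) →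
      ∀ t ∈ Ico (T - s) T, v t b < 2 * ε * s ^ (-(1 / (p - 1))) := by
  have hp' : 0 < p - 1 := sub_pos.2 hp
  obtain ⟨m, hm⟩ := exists_nat_ge (3 * M ^ (p - 1) + 1 / (p - 1))
  have hβ : 0 < 1 / (p - 1) := one_div_pos.2 hp'
  have hMp : 0 < M ^ (p - 1) := rpow_pos_of_pos hM _
  set ε : ℝ := (1 / 7) ^ (1 / (p - 1)) / 3
  have hε : 0 < ε := by positivity
  have hε₇ : (3 * ε) ^ (p - 1) = 1 / 7 := by
    rw [mul_div_cancel₀ _ three_ne_zero, ← rpow_mul (by norm_num), one_div_mul_cancel hp'.ne',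
      rpow_one]
  set K : ℝ := 2 * (4 * ((m + 2) * (m + 1)) + 2 * finrank ℝ E * (m + 2)) with hK
  set R := M / ε + 1
  have hR : 1 ≤ R := le_add_of_nonneg_left (by positivity)
  have hMR : M ≤ ε * R := by
    rw [mul_add, mul_div_cancel₀ _ hε.ne']
    linarith
  refine ⟨ε, hε, K * R, by positivity, ?_⟩
  intro Ω T v hΩ hv hI s hs hsT b hb ρ hρ hwide hinit
  exact hv.lt_of_funnel hΩ hp hM.le hI hε hε₇.le (by linarith) (by linarith) hK hR hMR hs hsT hb hρ
    hwide hinit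

end IsClassicalSubsol

end Propagation

section Regularity

variable {E : Type*} [NormedAddCommGroup E] [InnerProductSpace ℝ E] [FiniteDimensional ℝ E]
  [MeasurableSpace E] [BorelSpace E]

variable (E) in
theorem IsClassicalSubsol.exists_epsilon_regularity {p M : ℝ} (hp : 1 < p) (hM : 0 < M) :
    ∃ c > 0, ∃ R > 0, ∀ (Ω : Set E) (T : ℝ) (v : ℝ → E → ℝ), IsOpen Ω →
      IsClassicalSubsol Ω p T v → TypeIBound Ω p T M v →
      ∀ s > 0, s < T → ∀ a, ∀ δ > 0, R * s ≤ δ ^ 2 →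
      ∫⁻ x in Ω ∩ ball a δ,
        ENNReal.ofReal (|v (T - s) x| ^ ((finrank ℝ E : ℝ) * (p - 1) / 2)) < ENNReal.ofReal c →
      ∃ C, ∀ t ∈ Ico (T - s / 2) T, ∀ x ∈ Ω ∩ ball a (δ / 3), v t x ≤ C := by
  obtain ⟨ε, hε, R₁, hR₁, hpropagation⟩ := exists_propagation E hp hM
  obtain ⟨c, hc, R₂, hR₂, hsmoothing⟩ := exists_smoothing E hp hM hε
  refine ⟨c, hc, 9 * (R₁ + R₂), by positivity, ?_⟩
  intro Ω T v hΩ hv hI s hs hsT a δ hδ hR hint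
  have hR₁s : R₁ * (s / 2) ≤ (δ / 3) ^ 2 := by nlinarith [mul_pos hR₁ hs, mul_pos hR₂ hs]
  have hR₂s : R₂ * (s / 2) ≤ (δ / 3) ^ 2 := by nlinarith [mul_pos hR₁ hs, mul_pos hR₂ hs]
  refine ⟨2 * ε * (s / 2) ^ (-(1 / (p - 1))), fun t ht b hb => ?_⟩
  refine (hpropagation Ω T v hΩ hv hI (s / 2) (half_pos hs) (by linarith) b hb.1 (δ / 3)
    (by positivity) hR₁s (fun x hx => ?_) t ht).le
  have hball : closedBall x (δ / 3) ⊆ ball a δ := by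
    refine closedBall_subset_ball' ?_
    linarith [dist_triangle x b a, mem_closedBall.1 hx.2, mem_ball.1 hb.2]
  have hsmall := hsmoothing Ω T v hΩ hv hI (T - s) (by linarith) (s / 2) (half_pos hs)
    (by linarith) x hx.1 (δ / 3) (by positivity) hR₂s
    ((lintegral_mono_set (inter_subset_inter_right Ω hball)).trans_lt hint)
  rwa [show T - s + s / 2 = T - s / 2 by ring] at hsmall

theorem not_blowupPoint_of_forall_le {N : ℕ} {Ω : Set (EuclideanSpace ℝ (Fin N))} {T s r C C' : ℝ}
    {u : ℝ → EuclideanSpace ℝ (Fin N) → ℝ} {a : EuclideanSpace ℝ (Fin N)} (hs : 0 < s)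
    (hr : 0 < r) (hle : ∀ t ∈ Ico (T - s) T, ∀ x ∈ Ω ∩ ball a r, u t x ≤ C)
    (hge : ∀ t ∈ Ico (T - s) T, ∀ x ∈ Ω ∩ ball a r, -u t x ≤ C') : ¬BlowupPoint Ω u T a := by
  intro ha
  obtain ⟨t, ht, x, hx, hlarge⟩ := ha (max C C') (min s r) (lt_min hs hr)
  have ht' : t ∈ Ico (T - s) T := ⟨by linarith [ht.1, min_le_left s r], ht.2⟩
  have hx' : x ∈ Ω ∩ ball a r := ⟨hx.1, ball_subset_ball (min_le_right s r) hx.2⟩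
  exact hlarge.not_ge (max_le_max (hle t ht' x hx') (hge t ht' x hx'))

theorem IsClassicalSol.exists_le_lintegral_of_blowupPoint {N : ℕ}
    {Ω : Set (EuclideanSpace ℝ (Fin N))} {u0 : EuclideanSpace ℝ (Fin N) → ℝ} {p T M : ℝ}
    {u : ℝ → EuclideanSpace ℝ (Fin N) → ℝ} (hu : IsClassicalSol Ω u0 p T u) (hΩ : IsOpen Ω)
    (hp : 1 < p) (hT : 0 < T) (hM : 0 < M)
    (htypeI : ∀ t ∈ Ico 0 T, ∀ x ∈ Ω, |u t x| ≤ M * (T - t) ^ (-(1 / (p - 1)))) :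
    ∃ c > 0, ∀ a, BlowupPoint Ω u T a → ∀ δ > 0, ∀ᶠ t in 𝓝[<] T,
      ENNReal.ofReal c ≤
        ∫⁻ x in Ω ∩ ball a δ, ENNReal.ofReal (|u t x| ^ ((N : ℝ) * (p - 1) / 2)) := by
  obtain ⟨c, hc, R, hR, hreg⟩ :=
    IsClassicalSubsol.exists_epsilon_regularity (EuclideanSpace ℝ (Fin N)) hp hM
  rw [finrank_euclideanSpace_fin] at hreg
  have hI : TypeIBound Ω p T M u := fun t ht x hx =>
    (le_abs_self _).trans (htypeI t (Ioo_subset_Ico_self ht) x hx)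
  have hI_neg : TypeIBound Ω p T M (-u) := fun t ht x hx =>
    (neg_le_abs _).trans (htypeI t (Ioo_subset_Ico_self ht) x hx)
  refine ⟨c, hc, fun a ha δ hδ => ?_⟩
  have hstart : max 0 (T - δ ^ 2 / R) < T := max_lt hT (sub_lt_self T (by positivity))
  filter_upwards [Ioo_mem_nhdsLT hstart] with t ht
  by_contra! hint
  have ht₀ : 0 < t := (le_max_left ..).trans_lt ht.1
  have hs : 0 < T - t := sub_pos.2 ht.2
  have hRs : R * (T - t) ≤ δ ^ 2 := by
    rw [mul_comm, ← le_div_iff₀ hR]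
    linarith [ht.1, le_max_right 0 (T - δ ^ 2 / R)]
  rw [← sub_sub_cancel T t] at hint
  obtain ⟨C, hC⟩ := hreg Ω T u hΩ (hu.isClassicalSubsol hΩ) hI (T - t) hs (by linarith) a δ hδ hRs
    hint
  obtain ⟨C', hC'⟩ := hreg Ω T (-u) hΩ (hu.isClassicalSubsol_neg hΩ) hI_neg (T - t) hs
    (by linarith) a δ hδ hRs (by simpa only [Pi.neg_apply, abs_neg] using hint)
  exact not_blowupPoint_of_forall_le (half_pos hs) (by positivity) hC hC' ha

end Regularity

theorem finite_setOf_eventually_le_measure {X ι : Type*} [TopologicalSpace X] [T2Space X]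
    [MeasurableSpace X] [OpensMeasurableSpace X] {l : Filter ι} {ν : ι → Measure X} {G : Set X}
    (hG : IsOpen G) {c : ℝ≥0∞} (hc : c ≠ 0) (hfin : liminf (fun i => ν i G) l < ⊤) :
    {a ∈ G | ∀ U ∈ 𝓝 a, ∀ᶠ i in l, c ≤ ν i U}.Finite := by
  by_contra hinf
  obtain ⟨B, hliminf, hB⟩ := exists_between hfin
  obtain ⟨n, hn⟩ := ENNReal.exists_nat_mul_gt hc hB.ne
  obtain ⟨F, hF, hcard⟩ := Set.Infinite.exists_subset_card_eq hinf n
  obtain ⟨U, hU, hdisj⟩ := F.finite_toSet.t2_separation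
  have hlower : ∀ᶠ i in l, ∀ a ∈ F, c ≤ ν i (U a ∩ G) := F.eventually_all.2 fun a ha =>
    (hF ha).2 _ (((hU a).2.inter hG).mem_nhds ⟨(hU a).1, (hF ha).1⟩)
  obtain ⟨i, hiB, hic⟩ := ((frequently_lt_of_liminf_lt (by isBoundedDefault) hliminf).and_eventually
    hlower).exists
  have hcount : n * c ≤ ν i G :=
    calc n * c = ∑ _ ∈ F, c := by simp [hcard]
      _ ≤ ∑ a ∈ F, ν i (U a ∩ G) := Finset.sum_le_sum hic
      _ = ν i (⋃ a ∈ F, U a ∩ G) := (measure_biUnion_finset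
          (hdisj.mono fun a => inter_subset_left)
          fun a _ => ((hU a).2.inter hG).measurableSet).symm
      _ ≤ ν i G := measure_mono (iUnion₂_subset fun a _ => inter_subset_right)
  exact (hn.trans_le hcount).not_gt hiB

/-- if the local critical `L^{q*}` quantity over `Ω ∩ B_{r₀}(a₀)` has finite
liminf as `t → T`, then a type I blow-up solution has at most finitely many blow-up points
in the ball `B_{r₀}(a₀)`. -/
theorem finitely_many_blowup_points_of_bounded_local_critical_norm
    (N : ℕ) (hN : 1 ≤ N)
    (Ω : Set (EuclideanSpace ℝ (Fin N))) (hΩ : IsOpen Ω)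
    (p : ℝ) (hp : 1 < p)
    (u0 : EuclideanSpace ℝ (Fin N) → ℝ) (hu0 : ∃ C, ∀ x ∈ Ω, |u0 x| ≤ C)
    (T : ℝ) (hT : 0 < T)
    (u : ℝ → EuclideanSpace ℝ (Fin N) → ℝ)
    (hsol : IsClassicalSol Ω u0 p T u)
    (hblowup : Tendsto (fun t => supNormOn Ω (u t)) (𝓝[<] T) (𝓝 (⊤ : ℝ≥0∞)))
    (M : ℝ) (hM : 0 < M)
    (htypeI : ∀ t ∈ Ico (0:ℝ) T, ∀ x ∈ Ω, |u t x| ≤ M * (T - t) ^ (-(1 / (p - 1))))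
    (a₀ : EuclideanSpace ℝ (Fin N)) (r₀ : ℝ) (hr₀ : 0 < r₀)
    (hfin : liminf (fun t => ∫⁻ x in Ω ∩ ball a₀ r₀,
        ENNReal.ofReal (|u t x| ^ ((N : ℝ) * (p - 1) / 2))) (𝓝[<] T) < ⊤) :
    {a : EuclideanSpace ℝ (Fin N) |
      a ∈ closure Ω ∧ a ∈ ball a₀ r₀ ∧ BlowupPoint Ω u T a}.Finite := by
  set ν : ℝ → Measure (EuclideanSpace ℝ (Fin N)) := fun t =>
    (volume.restrict Ω).withDensity fun x => ENNReal.ofReal (|u t x| ^ ((N : ℝ) * (p - 1) / 2))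
  have hν : ∀ t a r, ν t (ball a r) =
      ∫⁻ x in Ω ∩ ball a r, ENNReal.ofReal (|u t x| ^ ((N : ℝ) * (p - 1) / 2)) := by
    intro t a r
    rw [withDensity_apply _ measurableSet_ball, Measure.restrict_restrict measurableSet_ball,
      inter_comm]
  obtain ⟨c, hc, hconcentration⟩ := hsol.exists_le_lintegral_of_blowupPoint hΩ hp hT hM htypeI
  simp only [← hν] at hfin hconcentration
  refine (finite_setOf_eventually_le_measure isOpen_ball (ENNReal.ofReal_pos.2 hc).ne'
    hfin).subset fun a ha => ⟨ha.2.1, fun U hU => ?_⟩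
  obtain ⟨δ, hδ, hball⟩ := Metric.mem_nhds_iff.1 hU
  filter_upwards [hconcentration a ha.2.2 δ hδ] with t ht using ht.trans (measure_mono hball)
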